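/- For the weighted directed cycle digraph, suppose w i > 0 for every i ≠ j (where j is a fixed edge index) and the (possibly negative) weight w j satisfies w j > −1 / (Σ_{i ≠ j} 1 / w i). Then the cyclic pursuit system ẋ = −Lg x achieves consensus: 0 is a root of the characteristic polynomial of Lg of multiplicity exactly 1, and every nonzero eigenvalue λ ∈ ℂ of Lg (viewed as a complex matrix) has strictly positive real part. -/

import Mathlib

open Matrix


lemma cyc_sum_shift {M : Type*} [AddCommMonoid M] (m : ℕ) (f : Fin (m+2) → M) :
    ∑ i, f (i + 1) = ∑ i, f i :=
  Equiv.sum_comp (Equiv.addRight (1 : Fin (m+2))) f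

lemma cyc_const {m : ℕ} {x : Fin (m+2) → ℝ} (h : ∀ i, x i = x (i+1)) : ∀ i, x i = x 0 := by
  intro i
  induction i using Fin.induction with
  | zero => rfl
  | succ i ih =>
    rw [← ih, h i.castSucc, Fin.coeSucc_eq_succ]

lemma cyc_aux1 {m : ℕ} {w : Fin (m+2) → ℝ} {j : Fin (m+2)}
    (hw : ∀ i, i ≠ j → 0 < w i)
    (hK : 0 < 1 + w j * ∑ i ∈ Finset.univ.filter (fun i : Fin (m+2) => i ≠ j), 1 / w i)
    (x : Fin (m+2) → ℝ) (c : ℝ) (h : ∀ i, w i * (x i - x (i+1)) = c) :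
    ∀ i, x i = x 0 := by
  have hs : ∑ i, (x i - x (i+1)) = 0 := by
    rw [Finset.sum_sub_distrib, cyc_sum_shift m x, sub_self]
  have hsplit : (x j - x (j+1)) +
      ∑ i ∈ Finset.univ.filter (fun i : Fin (m+2) => i ≠ j), (x i - x (i+1)) = 0 := by
    rw [← hs, Finset.filter_ne',
      Finset.add_sum_erase _ (fun i => x i - x (i+1)) (Finset.mem_univ j)]
  have h2 : ∑ i ∈ Finset.univ.filter (fun i : Fin (m+2) => i ≠ j), (x i - x (i+1)) =
      c * ∑ i ∈ Finset.univ.filter (fun i : Fin (m+2) => i ≠ j), 1 / w i := by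
    rw [Finset.mul_sum]
    refine Finset.sum_congr rfl fun i hi => ?_
    have := hw i (by simpa using hi)
    rw [← h i]
    field_simp
  rw [h2] at hsplit
  have hc : c = 0 := by
    have h3 := h j
    generalize (∑ i ∈ Finset.univ.filter (fun i : Fin (m+2) => i ≠ j), 1 / w i) = T at *
    have : c * (1 + w j * T) = 0 := by
      linear_combination w j * hsplit - h3
    rcases mul_eq_zero.1 this with h | h
    · exact h
    · exact absurd h hK.ne'
  subst hc
  apply cyc_const
  intro i
  by_cases hi : i = j
  · subst hi; linarith
  · have := hw i hi
    have h3 := h i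
    rcases mul_eq_zero.1 h3 with h | h
    · linarith
    · linarith

lemma cyc_aux2 {m : ℕ} {w : Fin (m+2) → ℝ} {j : Fin (m+2)}
    (hw : ∀ i, i ≠ j → 0 < w i)
    (hK : 0 < 1 + w j * ∑ i ∈ Finset.univ.filter (fun i : Fin (m+2) => i ≠ j), 1 / w i)
    (x : Fin (m+2) → ℂ) (hx : x ≠ 0) (μ : ℂ) (hμ : μ ≠ 0)
    (h : ∀ i, (w i : ℂ) * (x i - x (i+1)) = μ * x i) : 0 < μ.re := by
  have hd : ∀ i, i ≠ j → x i - x (i+1) = μ * (x i / (w i : ℂ)) := by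
    intro i hi
    have h0 : (w i : ℂ) ≠ 0 := by exact_mod_cast (hw i hi).ne'
    have := h i
    field_simp
    linear_combination this
  -- positivity of q
  set S := Finset.univ.filter (fun i : Fin (m+2) => i ≠ j) with hS
  have hmem : ∀ i, i ∈ S ↔ i ≠ j := by intro i; simp [hS]
  have hqnn : ∀ i ∈ S, 0 ≤ ‖x i‖^2 / w i := fun i hi =>
    div_nonneg (sq_nonneg _) (hw i ((hmem i).1 hi)).le
  have hq : 0 < ∑ i ∈ S, ‖x i‖^2 / w i := by
    refine lt_of_le_of_ne (Finset.sum_nonneg hqnn) fun h0 => hx ?_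
    have hz := (Finset.sum_eq_zero_iff_of_nonneg hqnn).1 h0.symm
    have hz' : ∀ i, i ≠ j → x i = 0 := by
      intro i hi
      have h1 := hz i ((hmem i).2 hi)
      have h2 := hw i hi
      rcases div_eq_zero_iff.1 h1 with h3 | h3
      · simpa using h3
      · linarith
    funext i
    by_cases hi : i = j
    · subst hi
      have hne : i - 1 ≠ i := by simp
      have h1 := hd (i-1) hne
      rw [hz' _ hne] at h1
      simpa using h1
    · exact hz' i hi
  have hsplit : ∀ f : Fin (m+2) → ℂ, ∑ i, f i = f j + ∑ i ∈ S, f i := by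
    intro f
    rw [hS, Finset.filter_ne', Finset.add_sum_erase _ _ (Finset.mem_univ j)]
  have hdj : w j ≠ 0 → x j - x (j+1) = μ * (x j / (w j : ℂ)) := by
    intro hj
    have h0 : (w j : ℂ) ≠ 0 := by exact_mod_cast hj
    have := h j
    field_simp
    linear_combination this
  have hQ : 0 < ‖x j‖^2 / w j + ∑ i ∈ S, ‖x i‖^2 / w i := by
    rcases le_or_gt 0 (w j) with hj | hj
    · have : 0 ≤ ‖x j‖^2 / w j := by positivity
      linarith
    · have hsum : x j / (w j : ℂ) = - ∑ i ∈ S, x i / (w i : ℂ) := by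
        have h1 : ∑ i, (x i - x (i+1)) = 0 := by
          rw [Finset.sum_sub_distrib, cyc_sum_shift m x, sub_self]
        rw [hsplit, hdj hj.ne, Finset.sum_congr rfl (fun i hi => hd i ((hmem i).1 hi)),
          ← Finset.mul_sum, ← mul_add] at h1
        have h2 := (mul_eq_zero.1 h1).resolve_left hμ
        linear_combination h2
      have hn1 : ‖x j‖ / |w j| ≤ ∑ i ∈ S, ‖x i‖ / w i := by
        have h1 : ‖x j / (w j : ℂ)‖ ≤ ∑ i ∈ S, ‖x i / (w i : ℂ)‖ := by
          rw [hsum, norm_neg]; exact norm_sum_le _ _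
        rw [norm_div, Complex.norm_real, Real.norm_eq_abs] at h1
        refine h1.trans (le_of_eq (Finset.sum_congr rfl fun i hi => ?_))
        rw [norm_div, Complex.norm_real, Real.norm_eq_abs, abs_of_pos (hw i ((hmem i).1 hi))]
      have hcs : (∑ i ∈ S, ‖x i‖ / w i)^2 ≤ (∑ i ∈ S, 1 / w i) * ∑ i ∈ S, ‖x i‖^2 / w i := by
        apply Finset.sum_sq_le_sum_mul_sum_of_sq_eq_mul
        · intro i hi
          exact (div_pos one_pos (hw i ((hmem i).1 hi))).le
        · exact hqnn
        · intro i hi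
          have := hw i ((hmem i).1 hi)
          field_simp
      have h3 : (‖x j‖ / |w j|)^2 ≤ (∑ i ∈ S, ‖x i‖ / w i)^2 := by gcongr
      have h4 := h3.trans hcs
      rw [div_pow, sq_abs] at h4
      generalize (∑ i ∈ S, 1 / w i) = T at *
      generalize (∑ i ∈ S, ‖x i‖^2 / w i) = q at *
      have e : ‖x j‖^2 / w j = w j * (‖x j‖^2 / w j^2) := by field_simp
      rw [e]
      nlinarith [mul_pos hq hK, mul_le_mul_of_nonpos_left h4 hj.le]
  -- the identity
  have hid : ∑ i, (starRingEnd ℂ (x i)) * (x i - x (i+1)) =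
      μ * ((‖x j‖^2 / w j + ∑ i ∈ S, ‖x i‖^2 / w i : ℝ) : ℂ) := by
    rw [hsplit, Complex.ofReal_add, mul_add]
    congr 1
    · by_cases hj : w j = 0
      · have h1 := h j
        rw [hj] at h1
        have : x j = 0 := by simpa [hμ] using h1
        simp [this]
      · rw [hdj hj]
        push_cast
        rw [← Complex.conj_mul']
        ring
    · rw [Complex.ofReal_sum, Finset.mul_sum]
      refine Finset.sum_congr rfl fun i hi => ?_
      rw [hd i ((hmem i).1 hi)]
      push_cast
      rw [← Complex.conj_mul']
      ring
  have hre : 2 * (∑ i, (starRingEnd ℂ (x i)) * (x i - x (i+1))).re =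
      ∑ i, Complex.normSq (x i - x (i+1)) := by
    have h1 : ∀ i, 2 * ((starRingEnd ℂ (x i)) * (x i - x (i+1))).re =
        Complex.normSq (x i - x (i+1)) + (Complex.normSq (x i) - Complex.normSq (x (i+1))) := by
      intro i
      simp [Complex.normSq_apply]
      ring
    rw [Complex.re_sum, Finset.mul_sum, Finset.sum_congr rfl (fun i _ => h1 i),
      Finset.sum_add_distrib, Finset.sum_sub_distrib,
      cyc_sum_shift m (fun i => Complex.normSq (x i)), sub_self, add_zero]
  have hpos : 0 < ∑ i, Complex.normSq (x i - x (i+1)) := by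
    refine lt_of_le_of_ne (Finset.sum_nonneg fun i _ => Complex.normSq_nonneg _) fun h0 => hx ?_
    have hz := (Finset.sum_eq_zero_iff_of_nonneg
      (fun i _ => Complex.normSq_nonneg _)).1 h0.symm
    funext i
    have h1 := Complex.normSq_eq_zero.1 (hz i (Finset.mem_univ i))
    have h2 := h i
    rw [h1] at h2
    simpa [hμ] using h2
  rw [hid, Complex.re_mul_ofReal] at hre
  rw [← hre] at hpos
  have := pos_of_mul_pos_left (by linarith : 0 < μ.re * _) hQ.le
  exact this

/-- For the weighted directed cycle digraph with `w i > 0` for all `i ≠ j`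
and `w j > −1 / (Σ_{i ≠ j} 1/(w i))`, the cyclic pursuit system `ẋ = −Lg x` achieves
consensus: 0 is a simple root of the characteristic polynomial of `Lg`, and every
nonzero complex eigenvalue of `Lg` has strictly positive real part. -/
theorem cycle_consensus_robust_weight_perturbation
    (n : ℕ) (hn : 2 ≤ n) (w : Fin n → ℝ) (j : Fin n)
    (hw : ∀ i : Fin n, i ≠ j → 0 < w i)
    (hwj : w j > -(1 / ∑ i ∈ Finset.univ.filter (fun i : Fin n => i ≠ j), 1 / w i))
    (E : Matrix (Fin n) (Fin n) ℝ)
    (hE : ∀ v i, E v i = if v = i then 1 else if v = i + ⟨1, by omega⟩ then -1 else 0)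
    (A : Matrix (Fin n) (Fin n) ℝ) (hA : A = 1)
    (W : Matrix (Fin n) (Fin n) ℝ) (hW : W = Matrix.diagonal w)
    (Lg : Matrix (Fin n) (Fin n) ℝ) (hLg : Lg = A * W * Eᵀ) :
    Polynomial.rootMultiplicity 0 Lg.charpoly = 1 ∧
    ∀ μ : ℂ, μ ≠ 0 →
      (∃ x : Fin n → ℂ, x ≠ 0 ∧ (Lg.map Complex.ofReal).mulVec x = μ • x) →
      0 < μ.re := by
  obtain ⟨m, rfl⟩ : ∃ m, n = m + 2 := ⟨n - 2, by omega⟩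
  have hone : (⟨1, by omega⟩ : Fin (m+2)) = 1 := rfl
  rw [hone] at hE
  have hL : ∀ i k, Lg i k = w i * ((if k = i then 1 else 0) - (if k = i + 1 then 1 else 0)) := by
    intro i k
    rw [hLg, hA, hW, one_mul, Matrix.diagonal_mul, Matrix.transpose_apply, hE]
    by_cases h1 : k = i
    · subst h1; simp
    · by_cases h2 : k = i + 1 <;> simp [h1, h2]
  have hT : 0 < ∑ i ∈ Finset.univ.filter (fun i : Fin (m+2) => i ≠ j), 1 / w i := by
    apply Finset.sum_pos
    · intro i hi
      exact div_pos one_pos (hw i (by simpa using hi))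
    · exact ⟨j + 1, by simp⟩
  have hK : 0 < 1 + w j * ∑ i ∈ Finset.univ.filter (fun i : Fin (m+2) => i ≠ j), 1 / w i := by
    generalize (∑ i ∈ Finset.univ.filter (fun i : Fin (m+2) => i ≠ j), 1 / w i) = T at *
    have h1 := mul_lt_mul_of_pos_right hwj hT
    have h2 : -(1 / T) * T = -1 := by field_simp
    linarith
  constructor
  · have hmv : ∀ (x : Fin (m+2) → ℝ) i, (Matrix.toLin' Lg x) i = w i * (x i - x (i+1)) := by
      intro x i
      rw [Matrix.toLin'_apply, Matrix.mulVec, dotProduct]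
      simp only [hL, mul_assoc, ← Finset.mul_sum, sub_mul, Finset.sum_sub_distrib]
      simp
    have hpow : ∀ (k : ℕ) (x : Fin (m+2) → ℝ), ((Matrix.toLin' Lg)^k) x = 0 →
        ∀ i, x i = x 0 := by
      intro k
      induction k with
      | zero => intro x hx i; simp at hx; simp [hx]
      | succ k ih =>
        intro x hx
        rw [pow_succ, Module.End.mul_apply] at hx
        have h1 := ih _ hx
        refine cyc_aux1 hw hK x ((Matrix.toLin' Lg x) 0) fun i => ?_
        rw [← hmv, h1 i]
    have hspan : Module.End.maxGenEigenspace (Matrix.toLin' Lg) 0 =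
        Submodule.span ℝ {(fun _ => 1 : Fin (m+2) → ℝ)} := by
      ext x
      rw [Module.End.mem_maxGenEigenspace, Submodule.mem_span_singleton]
      constructor
      · rintro ⟨k, hk⟩
        rw [zero_smul, sub_zero] at hk
        refine ⟨x 0, ?_⟩
        funext i
        simp [hpow k x hk i]
      · rintro ⟨a, rfl⟩
        refine ⟨1, ?_⟩
        rw [zero_smul, sub_zero, pow_one]
        funext i
        rw [hmv]
        simp
    have hfr := LinearMap.finrank_maxGenEigenspace_zero_eq (Matrix.toLin' Lg)
    rw [hspan, finrank_span_singleton (by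
      intro h; have := congrFun h 0; simp at this), Matrix.charpoly_toLin'] at hfr
    rw [Polynomial.rootMultiplicity_eq_natTrailingDegree']
    exact hfr.symm
  · rintro μ hμ ⟨x, hx, hxe⟩
    refine cyc_aux2 hw hK x hx μ hμ fun i => ?_
    have h1 := congrFun hxe i
    rw [Pi.smul_apply, smul_eq_mul] at h1
    rw [← h1, Matrix.mulVec, dotProduct]
    simp only [Matrix.map_apply, hL, Complex.ofReal_mul, mul_assoc, ← Finset.mul_sum,
      Complex.ofReal_sub, sub_mul, Finset.sum_sub_distrib]
    simp [apply_ite Complex.ofReal]
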